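/- For all n ≥ 0, the following identity holds: (q^2; q^2)_n / (1 - q^2)^n * (1 + qZ)^n = sum over k from 0 to n of the q^2-binomial coefficient (n choose k)_{q^2} times D_k^B(q, Z), where D_k^B(q,Z) is the generating polynomial for signed derangements of order k by (fmaj, neg). -/

import Mathlib

open Finset

attribute [local instance] Classical.propDecidable

noncomputable section

/-- The word `x_1 x_2 ... x_n` (0-indexed) of a signed permutation of order `n`,
encoded as a pair (permutation, signs): `x_i = ±(σ(i)+1)`. -/
def sword (n : ℕ) (w : Equiv.Perm (Fin n) × (Fin n → Bool)) : ℕ → ℤ :=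
  fun i => if h : i < n then
      (if w.2 ⟨i, h⟩ then -(((w.1 ⟨i, h⟩ : ℕ) : ℤ) + 1) else (((w.1 ⟨i, h⟩ : ℕ) : ℤ) + 1))
    else 0

/-- number of negative letters -/
def negStat (n : ℕ) (x : ℕ → ℤ) : ℕ := ((Finset.range n).filter (fun i => x i < 0)).card

/-- number of positive fixed points (`x_i = i`, 1-indexed) -/
def fixPlus (n : ℕ) (x : ℕ → ℤ) : ℕ :=
  ((Finset.range n).filter (fun i => x i = (i : ℤ) + 1)).card

/-- number of negative fixed points (`x_i = -i`, 1-indexed) -/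
def fixMinus (n : ℕ) (x : ℕ → ℤ) : ℕ :=
  ((Finset.range n).filter (fun i => x i = -((i : ℤ) + 1))).card

/-- major index of the word -/
def majStat (n : ℕ) (x : ℕ → ℤ) : ℕ :=
  ∑ i ∈ Finset.range (n - 1), if x (i + 1) < x i then i + 1 else 0

/-- number of inversions of the word -/
def invStat (n : ℕ) (x : ℕ → ℤ) : ℕ :=
  ((Finset.range n ×ˢ Finset.range n).filter (fun p => p.1 < p.2 ∧ x p.2 < x p.1)).card

/-- length function `ℓ(w) = inv w + ∑_{x_i<0} |x_i|` -/
def lenStat (n : ℕ) (x : ℕ → ℤ) : ℕ :=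
  invStat n x + ∑ i ∈ Finset.range n, if x i < 0 then (x i).natAbs else 0

/-- flag-major index `fmaj = 2 maj + neg` -/
def fmajStat (n : ℕ) (x : ℕ → ℤ) : ℕ := 2 * majStat n x + negStat n x

/-- the word `x_0 ... x_{m-1}` has its leftmost trough at position `2k` (1-indexed):
`x_1 > x_2 > ... > x_{2k}` and `x_{2k} < x_{2k+1}` (with `x_{m+1} = ∞`). -/
def IsDesarAt (m k : ℕ) (x : ℕ → ℤ) : Prop :=
  1 ≤ k ∧ 2 * k ≤ m ∧ (∀ i, i + 1 < 2 * k → x (i + 1) < x i) ∧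
    (2 * k = m ∨ x (2 * k - 1) < x (2 * k))

/-- a word of length `m` is a desarrangement (empty word included) -/
def IsDesar (m : ℕ) (x : ℕ → ℤ) : Prop :=
  m = 0 ∨ ∃ k, IsDesarAt m k x

/-- the length of the longest right factor of the word of length `n`
which is a desarrangement -/
def dlen (n : ℕ) (x : ℕ → ℤ) : ℕ :=
  sSup {m | m ≤ n ∧ IsDesar m (fun i => x (n - m + i))}

/-- number of letters of `w^-` in the pixed factorization `w = w^- w^+ w^d` -/
def pixMinus (n : ℕ) (x : ℕ → ℤ) : ℕ :=
  ((Finset.range (n - dlen n x)).filter (fun i => x i < 0)).card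

/-- number of letters of `w^+` in the pixed factorization `w = w^- w^+ w^d` -/
def pixPlus (n : ℕ) (x : ℕ → ℤ) : ℕ :=
  ((Finset.range (n - dlen n x)).filter (fun i => 0 < x i)).card

/-- the number of derangements of an `m`-element set -/
def dnum (m : ℕ) : ℕ :=
  (Finset.univ.filter (fun σ : Equiv.Perm (Fin m) => ∀ i, σ i ≠ i)).card

/-- the word of an ordinary permutation of `{1, ..., m}` -/
def pword (m : ℕ) (σ : Equiv.Perm (Fin m)) : ℕ → ℤ :=
  fun i => if h : i < m then ((σ ⟨i, h⟩ : ℕ) : ℤ) + 1 else 0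

/-- the q-ascending factorial `(q;q)_m` -/
def qq {K : Type*} [CommRing K] (q : K) (m : ℕ) : K :=
  ∏ i ∈ Finset.range m, (1 - q ^ (i + 1))

/-- `D_m(q)`: generating polynomial for derangements of order `m` by major index -/
def Dmaj {K : Type*} [CommRing K] (q : K) (m : ℕ) : K :=
  ∑ σ ∈ Finset.univ.filter (fun σ : Equiv.Perm (Fin m) => ∀ i, σ i ≠ i),
    q ^ majStat m (pword m σ)

/-- `D_n^B(q,Z)`: generating polynomial for signed derangements of order `n`
(no positive fixed point) by `(fmaj, neg)`. -/
def DB {K : Type*} [CommRing K] (q Z : K) (n : ℕ) : K :=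
  ∑ w ∈ Finset.univ.filter
      (fun w : Equiv.Perm (Fin n) × (Fin n → Bool) => fixPlus n (sword n w) = 0),
    q ^ fmajStat n (sword n w) * Z ^ negStat n (sword n w)

/-!
Both sides are the generating polynomial of *all* signed permutations of order `n` by
`(fmaj, neg)`. The left side is MacMahon's theorem on the major index together with the free choice
of the signs of the absolute values `1, …, n`. The right side sorts the signed permutations by their
set of positive fixed points. Replace these fixed points by `0`, the letters exceeding their
position by large positive letters and the remaining ones by large negative letters: no descent is
created or destroyed. Adding positive fixed points to a signed derangement `d` of order `k` thus
amounts to inserting `n - k` zeros into a word of `k` nonzero letters with the descents of `d`, and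
over all choices of positions the major index is distributed as `t ^ maj d` times the Gaussian
binomial coefficient, by induction on the last letter and the two `t`-Pascal rules.

MacMahon's theorem is itself a case of this insertion: subtracting one letter from all the others
turns a word of distinct letters into a word of nonzero letters with a single zero inserted.
-/

section QAnalogues

variable {R : Type*} [CommRing R] (t : R)

/-- The Gaussian binomial coefficient `(n choose k)_t`. It is defined by the `t`-Pascal rule rather
than by a quotient of factorials so that it makes sense over any commutative ring. -/
def gaussBinom : ℕ → ℕ → R
  | _, 0 => 1
  | 0, _ + 1 => 0
  | n + 1, k + 1 => gaussBinom n k + t ^ (k + 1) * gaussBinom n (k + 1)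

/-- The `t`-factorial `[n]_t! = ∏ (1 + t + ⋯ + t ^ i)`, the product being over `i < n`. -/
def qFactorial (n : ℕ) : R := ∏ i ∈ range n, ∑ j ∈ range (i + 1), t ^ j

lemma gaussBinom_zero_right (n : ℕ) : gaussBinom t n 0 = 1 := by
  cases n <;> rfl

lemma gaussBinom_succ_succ (n k : ℕ) :
    gaussBinom t (n + 1) (k + 1) = gaussBinom t n k + t ^ (k + 1) * gaussBinom t n (k + 1) := rfl

lemma gaussBinom_eq_zero_of_lt {n k : ℕ} (h : n < k) : gaussBinom t n k = 0 := by
  induction n generalizing k with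
  | zero => cases k with
    | zero => exact absurd h (lt_irrefl 0)
    | succ k => rfl
  | succ n ih => cases k with
    | zero => exact absurd h (Nat.not_lt_zero _)
    | succ k => rw [gaussBinom_succ_succ, ih (by omega), ih (by omega), mul_zero, add_zero]

lemma gaussBinom_self (n : ℕ) : gaussBinom t n n = 1 := by
  induction n with
  | zero => rfl
  | succ n ih =>
    rw [gaussBinom_succ_succ, ih, gaussBinom_eq_zero_of_lt t n.lt_succ_self, mul_zero, add_zero]

lemma gaussBinom_succ_self (n : ℕ) : gaussBinom t (n + 1) n = ∑ i ∈ range (n + 1), t ^ i := by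
  induction n with
  | zero => simp [gaussBinom_zero_right]
  | succ n ih => rw [gaussBinom_succ_succ, ih, gaussBinom_self, mul_one, ← sum_range_succ]

lemma gaussBinom_succ_succ' (n k : ℕ) :
    gaussBinom t (n + 1) (k + 1) = t ^ (n - k) * gaussBinom t n k + gaussBinom t n (k + 1) := by
  induction n generalizing k with
  | zero => cases k <;> simp [gaussBinom]
  | succ n ih => cases k with
    | zero =>
      have pascal := gaussBinom_succ_succ t n 0
      have pascal' := ih 0
      rw [gaussBinom_succ_succ]
      simp only [gaussBinom_zero_right, zero_add, tsub_zero, mul_one] at pascal pascal' ⊢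
      linear_combination t * pascal' - pascal
    | succ k =>
      have exponents : t ^ (k + 2) * t ^ (n - (k + 1)) * gaussBinom t n (k + 1)
          = t ^ (n - k) * t ^ (k + 1) * gaussBinom t n (k + 1) := by
        rcases lt_or_ge n (k + 1) with h | h
        · rw [gaussBinom_eq_zero_of_lt t h, mul_zero, mul_zero]
        · rw [← pow_add, ← pow_add]
          congr 2
          omega
      rw [gaussBinom_succ_succ, Nat.add_sub_add_right]
      linear_combination ih k + t ^ (k + 2) * ih (k + 1) + exponents
        - t ^ (n - k) * gaussBinom_succ_succ t n k - gaussBinom_succ_succ t n (k + 1)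

lemma qq_succ (n : ℕ) : qq t (n + 1) = qq t n * (1 - t ^ (n + 1)) := prod_range_succ _ _

lemma gaussBinom_mul_qq_mul_qq (k r : ℕ) :
    gaussBinom t (k + r) k * (qq t k * qq t r) = qq t (k + r) := by
  induction k generalizing r with
  | zero => simp [gaussBinom_zero_right, qq]
  | succ k ihk => induction r with
    | zero => simp [gaussBinom_self, qq]
    | succ r ihr =>
      have ihk' := ihk (r + 1)
      rw [show k + 1 + r = k + (r + 1) by omega, qq_succ t k] at ihr
      rw [qq_succ t r] at ihk'
      rw [show k + 1 + (r + 1) = k + (r + 1) + 1 by omega, gaussBinom_succ_succ,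
        qq_succ t (k + (r + 1)), qq_succ t k, qq_succ t r]
      linear_combination (1 - t ^ (k + 1)) * ihk' + t ^ (k + 1) * (1 - t ^ (r + 1)) * ihr

lemma qFactorial_mul_one_sub_pow (n : ℕ) : qFactorial t n * (1 - t) ^ n = qq t n := by
  rw [qFactorial, qq, ← card_range n, ← prod_const, card_range, ← prod_mul_distrib]
  exact prod_congr rfl fun i _ => geom_sum_mul_neg t (i + 1)

end QAnalogues

section MajorIndex

lemma majStat_congr {n : ℕ} {x y : ℕ → ℤ}
    (h : ∀ i, i + 1 < n → (x (i + 1) < x i ↔ y (i + 1) < y i)) : majStat n x = majStat n y := by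
  refine sum_congr rfl fun i hi => ?_
  rw [mem_range] at hi
  simp only [h i (by omega)]

lemma majStat_update_last (n : ℕ) (x : ℕ → ℤ) (c : ℤ) :
    majStat (n + 1) (Function.update x n c) = majStat n x + if c < x (n - 1) then n else 0 := by
  cases n with
  | zero => simp [majStat]
  | succ n =>
    simp only [majStat, Nat.add_sub_cancel, sum_range_succ, Function.update_self,
      Function.update_of_ne n.lt_succ_self.ne]
    congr 1
    refine sum_congr rfl fun i hi => ?_
    rw [mem_range] at hi
    rw [Function.update_of_ne (by omega), Function.update_of_ne (by omega)]

/-- The word with the letters of `y`, in order, at the positions in `S` and zeros elsewhere. -/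
def insertZeros (y : ℕ → ℤ) (S : Finset ℕ) : ℕ → ℤ :=
  fun i => if i ∈ S then y (Nat.count (· ∈ S) i) else 0

lemma insertZeros_of_notMem (y : ℕ → ℤ) {S : Finset ℕ} {i : ℕ} (hi : i ∉ S) :
    insertZeros y S i = 0 := if_neg hi

lemma insertZeros_empty (y : ℕ → ℤ) : insertZeros y ∅ = 0 :=
  funext fun i => insertZeros_of_notMem y (notMem_empty i)

lemma insertZeros_orderEmb {k : ℕ} (y : ℕ → ℤ) (e : Fin k ↪o ℕ) (j : Fin k) :
    insertZeros y (univ.map e.toEmbedding) (e j) = y j := by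
  have preceding : {x ∈ range (e j) | x ∈ univ.map e.toEmbedding} = (Iio j).map e.toEmbedding := by
    ext x
    simp only [mem_filter, mem_range, mem_map, mem_univ, true_and, mem_Iio]
    constructor
    · rintro ⟨hx, l, rfl⟩
      exact ⟨l, e.lt_iff_lt.1 hx, rfl⟩
    · rintro ⟨l, hl, rfl⟩
      exact ⟨e.lt_iff_lt.2 hl, l, rfl⟩
  have hj : e j ∈ univ.map e.toEmbedding := mem_map_of_mem e.toEmbedding (mem_univ j)
  rw [insertZeros, if_pos hj, Nat.count_eq_card_filter_range,
    preceding, card_map, Fin.card_Iio]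

lemma insertZeros_map_valEmbedding_apply {k n : ℕ} (y : ℕ → ℤ) (e : Fin k ↪o Fin n) (j : Fin k) :
    insertZeros y ((univ.map e.toEmbedding).map Fin.valEmbedding) (e j) = y j := by
  rw [map_map]
  exact insertZeros_orderEmb y (e.trans (Fin.valOrderEmb n)) j

lemma insertZeros_map_valEmbedding_of_notMem {k n : ℕ} (y : ℕ → ℤ) (e : Fin k ↪o Fin n) {i : Fin n}
    (hi : i ∉ Set.range e) :
    insertZeros y ((univ.map e.toEmbedding).map Fin.valEmbedding) i = 0 :=
  insertZeros_of_notMem y <| (mem_map' Fin.valEmbedding).not.2 fun h => hi <| by simpa using h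

lemma update_insertZeros_zero (y : ℕ → ℤ) {N : ℕ} {S : Finset ℕ} (hS : S ⊆ range N) :
    Function.update (insertZeros y S) N 0 = insertZeros y S :=
  Function.update_eq_self_iff.2
    (insertZeros_of_notMem y fun h => notMem_range_self (hS h)).symm

lemma insertZeros_insert (y : ℕ → ℤ) {N : ℕ} {S : Finset ℕ} (hS : S ⊆ range N) :
    insertZeros y (insert N S) = Function.update (insertZeros y S) N (y #S) := by
  funext i
  rcases lt_trichotomy i N with hi | rfl | hi
  · have same_count : Nat.count (· ∈ insert N S) i = Nat.count (· ∈ S) i := by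
      simp only [Nat.count_eq_card_filter_range]
      congr 1
      refine filter_congr fun x hx => ?_
      rw [mem_insert, or_iff_right ((mem_range.1 hx).trans hi).ne]
    rw [Function.update_of_ne hi.ne]
    simp only [insertZeros, same_count]
    simp only [mem_insert, hi.ne, false_or]
  · have count_self : Nat.count (· ∈ insert i S) i = #S := by
      rw [Nat.count_eq_card_filter_range]
      congr 1
      ext x
      have := @hS x
      simp only [mem_filter, mem_range, mem_insert] at this ⊢
      grind
    rw [Function.update_self, insertZeros, if_pos (mem_insert_self i S), count_self]
  · have hiS : i ∉ S := fun h => hi.not_gt (mem_range.1 (hS h))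
    rw [Function.update_of_ne hi.ne', insertZeros_of_notMem y hiS,
      insertZeros_of_notMem y (by simp [hi.ne', hiS])]

lemma sum_powersetCard_succ_range {M : Type*} [AddCommMonoid M] (N k : ℕ) (f : Finset ℕ → M) :
    ∑ S ∈ powersetCard (k + 1) (range (N + 1)), f S
      = ∑ S ∈ powersetCard (k + 1) (range N), f S
        + ∑ S ∈ powersetCard k (range N), f (insert N S) := by
  have hN (m : ℕ) : ∀ S ∈ powersetCard m (range N), N ∉ S := fun S hS h =>
    notMem_range_self ((mem_powersetCard.1 hS).1 h)
  rw [range_add_one, powersetCard_succ_insert notMem_range_self, sum_union, sum_image]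
  · exact insert_erase_invOn.2.injOn.mono (hN k)
  · rw [disjoint_left]
    intro S hS hS'
    obtain ⟨T, -, rfl⟩ := mem_image.1 hS'
    exact hN _ _ hS (mem_insert_self N T)

section
variable {R : Type*} [CommRing R] (t : R)

lemma sum_pow_majStat_update_succ (y : ℕ → ℤ) (N k : ℕ) (c : ℤ) :
    ∑ S ∈ powersetCard (k + 1) (range (N + 1)),
        t ^ majStat (N + 2) (Function.update (insertZeros y S) (N + 1) c)
      = (∑ S ∈ powersetCard (k + 1) (range N),
          t ^ majStat (N + 1) (Function.update (insertZeros y S) N 0))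
            * t ^ (if c < 0 then N + 1 else 0)
        + (∑ S ∈ powersetCard k (range N),
          t ^ majStat (N + 1) (Function.update (insertZeros y S) N (y k)))
            * t ^ (if c < y k then N + 1 else 0) := by
  rw [sum_powersetCard_succ_range, sum_mul, sum_mul]
  congr 1 <;> refine sum_congr rfl fun S hS => ?_ <;> rw [mem_powersetCard] at hS
  · rw [update_insertZeros_zero y hS.1, majStat_update_last, Nat.add_sub_cancel,
      insertZeros_of_notMem y fun h => notMem_range_self (hS.1 h), pow_add]
  · rw [majStat_update_last, insertZeros_insert y hS.1, hS.2, Nat.add_sub_cancel,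
      Function.update_self, pow_add]

-- Each relative order of `a`, `c` and `0` reduces to one of the two Pascal rules.
lemma gaussBinom_pascal_of_ne_zero (N k : ℕ) {a : ℤ} (ha : a ≠ 0) (c : ℤ) :
    t ^ (if 0 < a then k + 1 else 0) * gaussBinom t N (k + 1) * t ^ (if c < 0 then N + 1 else 0)
        + t ^ (if a < 0 then N - k else 0) * gaussBinom t N k * t ^ (if c < a then N + 1 else 0)
      = t ^ (if c < a then k + 1 else 0) * t ^ (if c < 0 then N - k else 0)
          * gaussBinom t (N + 1) (k + 1) := by
  rcases lt_or_ge N k with hk | hk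
  · simp [gaussBinom_eq_zero_of_lt t, hk, Nat.lt_succ_of_lt hk]
  obtain ⟨r, rfl⟩ := Nat.exists_eq_add_of_le hk
  have pascal := gaussBinom_succ_succ t (k + r) k
  have pascal' := gaussBinom_succ_succ' t (k + r) k
  rw [Nat.add_sub_cancel_left] at pascal' ⊢
  rcases ha.lt_or_gt with ha | ha
  · rcases lt_or_ge c a with hca | hca
    · simp only [ha, hca, hca.trans ha, ha.not_gt, if_true, if_false, pascal']
      ring
    · rcases lt_or_ge c 0 with hc | hc
      · simp only [ha, hc, ha.not_gt, hca.not_gt, if_true, if_false, pascal]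
        ring
      · simp only [ha, hc.not_gt, ha.not_gt, hca.not_gt, if_true, if_false, pascal']
        ring
  · rcases lt_or_ge c a with hca | hca
    · rcases lt_or_ge c 0 with hc | hc
      · simp only [ha, hc, hca, ha.not_gt, if_true, if_false, pascal]
        ring
      · simp only [ha, hca, hc.not_gt, ha.not_gt, if_true, if_false, pascal']
        ring
    · simp only [ha, hca.not_gt, (ha.le.trans hca).not_gt, ha.not_gt, if_true, if_false, pascal]
      ring

lemma sum_pow_majStat_update_insertZeros (y : ℕ → ℤ) (N k : ℕ) (hy : ∀ i < k, y i ≠ 0) (c : ℤ) :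
    ∑ S ∈ powersetCard k (range N), t ^ majStat (N + 1) (Function.update (insertZeros y S) N c)
      = t ^ majStat (k + 1) (Function.update y k c) * (t ^ (if c < 0 then N - k else 0)
        * gaussBinom t N k) := by
  induction N generalizing k c with
  | zero => cases k with
    | zero => simp [majStat, gaussBinom]
    | succ k => rw [powersetCard_eq_empty.2 k.succ_pos, sum_empty, gaussBinom, mul_zero, mul_zero]
  | succ N ih => cases k with
    | zero =>
      rw [powersetCard_zero, sum_singleton, majStat_update_last, insertZeros_empty]
      simp [majStat, gaussBinom_zero_right]
    | succ k =>
      rw [sum_pow_majStat_update_succ, ih (k + 1) hy,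
        ih k fun i hi => hy i (hi.trans k.lt_succ_self), Function.update_eq_self,
        majStat_update_last, majStat_update_last, Nat.add_sub_cancel,
        Nat.add_sub_add_right, pow_add, pow_add, if_neg (lt_irrefl 0), pow_zero, one_mul]
      linear_combination t ^ majStat (k + 1) y *
        gaussBinom_pascal_of_ne_zero t N k (hy k k.lt_succ_self) c

lemma sum_pow_majStat_insertZeros_range (y : ℕ → ℤ) (N k : ℕ) (hy : ∀ i < k, y i ≠ 0) :
    ∑ S ∈ powersetCard k (range N), t ^ majStat N (insertZeros y S)
      = t ^ majStat k y * gaussBinom t N k := by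
  cases k with
  | zero =>
    rw [powersetCard_zero, sum_singleton, insertZeros_empty]
    simp [majStat, gaussBinom_zero_right]
  | succ k => cases N with
    | zero => rw [powersetCard_eq_empty.2 k.succ_pos, sum_empty, gaussBinom, mul_zero]
    | succ N =>
      have pascal := gaussBinom_pascal_of_ne_zero t N k (hy k k.lt_succ_self) (max 0 (y k))
      simp only [(le_max_left _ _).not_gt, (le_max_right _ _).not_gt, if_false] at pascal
      have last_zero := sum_pow_majStat_update_insertZeros t y N (k + 1) hy 0
      have last_letter := sum_pow_majStat_update_insertZeros t y N k
        (fun i hi => hy i (hi.trans k.lt_succ_self)) (y k)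
      rw [majStat_update_last, Nat.add_sub_cancel, pow_add, if_neg (lt_irrefl 0)] at last_zero
      rw [Function.update_eq_self] at last_letter
      have split_last :=
        sum_powersetCard_succ_range N k fun S => t ^ majStat (N + 1) (insertZeros y S)
      have without_last :
          ∑ S ∈ powersetCard (k + 1) (range N), t ^ majStat (N + 1) (insertZeros y S)
            = ∑ S ∈ powersetCard (k + 1) (range N),
                t ^ majStat (N + 1) (Function.update (insertZeros y S) N 0) :=
        sum_congr rfl fun S hS => by rw [update_insertZeros_zero y (mem_powersetCard.1 hS).1]
      have with_last :
          ∑ S ∈ powersetCard k (range N), t ^ majStat (N + 1) (insertZeros y (insert N S))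
            = ∑ S ∈ powersetCard k (range N),
                t ^ majStat (N + 1) (Function.update (insertZeros y S) N (y k)) :=
        sum_congr rfl fun S hS => by
          rw [insertZeros_insert y (mem_powersetCard.1 hS).1, (mem_powersetCard.1 hS).2]
      linear_combination split_last + without_last + with_last + last_zero + last_letter
        + t ^ majStat (k + 1) y * pascal

lemma sum_pow_majStat_insertZeros (y : ℕ → ℤ) (n k : ℕ) (hy : ∀ i < k, y i ≠ 0) :
    ∑ S ∈ powersetCard k (univ : Finset (Fin n)),
        t ^ majStat n (insertZeros y (S.map Fin.valEmbedding))
      = t ^ majStat k y * gaussBinom t n k := by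
  rw [← sum_pow_majStat_insertZeros_range t y n k hy, ← Nat.Iio_eq_range,
    ← Fin.map_valEmbedding_univ, powersetCard_map, sum_map]
  rfl

end
end MajorIndex

section MacMahon

/-- The letters of a finite word as a function on `ℕ`, the form in which `majStat` takes words;
it vanishes beyond the last letter. -/
def toWord {n : ℕ} (f : Fin n → ℤ) : ℕ → ℤ := Function.extend Fin.val f 0

lemma toWord_apply {n : ℕ} (f : Fin n → ℤ) (i : Fin n) : toWord f i = f i :=
  Fin.val_injective.extend_apply f 0 i

/-- The permutation with the value `0` at the position `p` and the values of `τ`, shifted up by one,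
in order at the other positions. -/
def insertPerm {n : ℕ} (p : Fin (n + 1)) (τ : Equiv.Perm (Fin n)) : Equiv.Perm (Fin (n + 1)) :=
  (finSuccEquiv' p).trans (τ.optionCongr.trans (finSuccEquiv' 0).symm)

lemma insertPerm_self {n : ℕ} (p : Fin (n + 1)) (τ : Equiv.Perm (Fin n)) :
    insertPerm p τ p = 0 := by
  simp [insertPerm]

lemma insertPerm_succAbove {n : ℕ} (p : Fin (n + 1)) (τ : Equiv.Perm (Fin n)) (i : Fin n) :
    insertPerm p τ (p.succAbove i) = (τ i).succ := by
  simp [insertPerm]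

lemma insertPerm_bijective (n : ℕ) :
    Function.Bijective fun x : Fin (n + 1) × Equiv.Perm (Fin n) => insertPerm x.1 x.2 := by
  rw [Fintype.bijective_iff_injective_and_card]
  refine ⟨?_, by simp [Fintype.card_perm, Nat.factorial_succ]⟩
  rintro ⟨p, τ⟩ ⟨p', τ'⟩ (h : insertPerm p τ = insertPerm p' τ')
  obtain rfl : p = p' := (insertPerm p' τ').injective <| by
    rw [insertPerm_self, ← h, insertPerm_self]
  congr 1
  ext1 i
  have hi := Equiv.congr_fun h (p.succAbove i)
  rwa [insertPerm_succAbove, insertPerm_succAbove, Fin.succ_inj] at hi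

lemma map_succAboveOrderEmb_univ {n : ℕ} (p : Fin (n + 1)) :
    univ.map (Fin.succAboveOrderEmb p).toEmbedding = {p}ᶜ := by
  rw [map_eq_image]
  exact Fin.image_succAbove_univ p

lemma toWord_comp_insertPerm_sub {n : ℕ} (f : Fin (n + 1) → ℤ) (p : Fin (n + 1))
    (τ : Equiv.Perm (Fin n)) (i : Fin (n + 1)) :
    toWord (f ∘ insertPerm p τ) i - f 0
      = insertZeros (toWord ((fun j => f j.succ - f 0) ∘ τ))
          (({p}ᶜ : Finset _).map Fin.valEmbedding) i := by
  rw [toWord_apply, Function.comp_apply, ← map_succAboveOrderEmb_univ]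
  rcases Fin.eq_self_or_eq_succAbove p i with rfl | ⟨j, rfl⟩
  · rw [insertPerm_self, sub_self, insertZeros_map_valEmbedding_of_notMem]
    exact fun ⟨j, hj⟩ => Fin.succAbove_ne i j hj
  · rw [insertPerm_succAbove]
    exact ((insertZeros_map_valEmbedding_apply _ (Fin.succAboveOrderEmb p) j).trans
      (toWord_apply ((fun j => f j.succ - f 0) ∘ τ) j)).symm

lemma majStat_comp_insertPerm {n : ℕ} (f : Fin (n + 1) → ℤ) (p : Fin (n + 1))
    (τ : Equiv.Perm (Fin n)) :
    majStat (n + 1) (toWord (f ∘ insertPerm p τ))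
      = majStat (n + 1) (insertZeros (toWord ((fun j => f j.succ - f 0) ∘ τ))
          (({p}ᶜ : Finset _).map Fin.valEmbedding)) := by
  refine majStat_congr fun i hi => ?_
  have left := toWord_comp_insertPerm_sub f p τ ⟨i, by omega⟩
  have right := toWord_comp_insertPerm_sub f p τ ⟨i + 1, hi⟩
  rw [← left, ← right, sub_lt_sub_iff_right]

lemma sum_compl_singleton {M : Type*} [AddCommMonoid M] (n : ℕ) (F : Finset (Fin (n + 1)) → M) :
    ∑ p : Fin (n + 1), F {p}ᶜ = ∑ S ∈ powersetCard n univ, F S := by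
  refine sum_bij (fun p _ => {p}ᶜ) (fun p _ => by simp [card_compl])
    (fun p _ p' _ h => by simpa using h) (fun S hS => ?_) fun _ _ => rfl
  obtain ⟨p, hp⟩ : ∃ p, Sᶜ = {p} := card_eq_one.1 <| by
    rw [card_compl, (mem_powersetCard.1 hS).2, Fintype.card_fin, Nat.add_sub_cancel_left]
  exact ⟨p, mem_univ p, by rw [← hp, compl_compl]⟩

theorem sum_perm_pow_majStat {R : Type*} [CommRing R] (t : R) {n : ℕ} {f : Fin n → ℤ}
    (hf : Function.Injective f) :
    ∑ σ : Equiv.Perm (Fin n), t ^ majStat n (toWord (f ∘ σ)) = qFactorial t n := by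
  induction n with
  | zero => simp [majStat, qFactorial]
  | succ n ih =>
    have shift_injective : Function.Injective fun j : Fin n => f j.succ - f 0 := fun i j h =>
      Fin.succ_injective n (hf (sub_left_injective h))
    have shift_ne (τ : Equiv.Perm (Fin n)) :
        ∀ i < n, toWord ((fun j => f j.succ - f 0) ∘ τ) i ≠ 0 := fun i hi => by
      rw [toWord_apply _ ⟨i, hi⟩]
      exact sub_ne_zero.2 (hf.ne (Fin.succ_ne_zero _))
    have sum_positions (τ : Equiv.Perm (Fin n)) :
        ∑ p, t ^ majStat (n + 1) (toWord (f ∘ insertPerm p τ))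
          = t ^ majStat n (toWord ((fun j => f j.succ - f 0) ∘ τ)) * gaussBinom t (n + 1) n := by
      rw [← sum_pow_majStat_insertZeros t _ _ _ (shift_ne τ), ← sum_compl_singleton]
      exact sum_congr rfl fun p _ => by rw [majStat_comp_insertPerm]
    rw [← (insertPerm_bijective n).sum_comp, Fintype.sum_prod_type_right]
    simp only [sum_positions]
    rw [← sum_mul, ih shift_injective, gaussBinom_succ_self, qFactorial, qFactorial,
      prod_range_succ]

end MacMahon

section SignedPerm

/-- Signed permutations of order `n`, encoded as in `sword`: `(σ, ε)` has the letter
`±(σ i + 1)` at the position `i`, negative exactly when `ε i` is `true`. -/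
abbrev SignedPerm (n : ℕ) := Equiv.Perm (Fin n) × (Fin n → Bool)

lemma sword_apply {n : ℕ} (w : SignedPerm n) (i : Fin n) :
    sword n w i = if w.2 i then -(((w.1 i : ℕ) : ℤ) + 1) else ((w.1 i : ℕ) : ℤ) + 1 := by
  simp only [sword, i.isLt, dif_pos]

lemma sword_neg_iff {n : ℕ} (w : SignedPerm n) (i : Fin n) : sword n w i < 0 ↔ w.2 i = true := by
  rw [sword_apply]
  split_ifs with h
  · exact iff_of_true (by omega) h
  · exact iff_of_false (by omega) h

lemma sword_eq_self_iff {n : ℕ} (w : SignedPerm n) (i : Fin n) :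
    sword n w i = ((i : ℕ) : ℤ) + 1 ↔ w.1 i = i ∧ w.2 i = false := by
  rw [sword_apply, Fin.ext_iff]
  cases w.2 i
  · simp
  · simp only [if_true, Bool.true_eq_false, and_false, iff_false]
    omega

lemma sword_injective {n : ℕ} (w : SignedPerm n) :
    Function.Injective fun i : Fin n => sword n w i := fun i j (h : sword n w i = sword n w j) => by
  rw [sword_apply, sword_apply] at h
  refine w.1.injective (Fin.ext ?_)
  split_ifs at h <;> omega

lemma abs_sword_le {n : ℕ} (w : SignedPerm n) (i : Fin n) : |sword n w i| ≤ n := by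
  have := (w.1 i).isLt
  rw [sword_apply, abs_le]
  split_ifs <;> omega

lemma card_filter_range_eq_card_fin (n : ℕ) (p : ℕ → Prop) [DecidablePred p] :
    #{i ∈ range n | p i} = #{i : Fin n | p i} := by
  rw [card_filter, card_filter, Fin.sum_univ_eq_sum_range (fun i => if p i then 1 else 0)]

lemma negStat_sword {n : ℕ} (w : SignedPerm n) :
    negStat n (sword n w) = #{i | w.2 i = true} := by
  simp only [negStat, card_filter_range_eq_card_fin, sword_neg_iff]

/-- The letter `±(v + 1)` of a signed permutation whose signs are given by absolute value, not by
position as in `SignedPerm`. -/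
def signedLetter {n : ℕ} (η : Fin n → Bool) (v : Fin n) : ℤ :=
  if η v then -((v : ℕ) + 1 : ℤ) else (v : ℕ) + 1

lemma signedLetter_injective {n : ℕ} (η : Fin n → Bool) :
    Function.Injective (signedLetter η) := by
  have letters : signedLetter η = fun i : Fin n => sword n (1, η) i :=
    funext fun i => (sword_apply (1, η) i).symm
  exact letters ▸ sword_injective (1, η)

lemma sword_comp {n : ℕ} (σ : Equiv.Perm (Fin n)) (η : Fin n → Bool) :
    sword n (σ, η ∘ σ) = toWord (signedLetter η ∘ σ) := by
  funext i
  by_cases hi : i < n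
  · exact (sword_apply (σ, η ∘ σ) ⟨i, hi⟩).trans
      (toWord_apply (signedLetter η ∘ σ) ⟨i, hi⟩).symm
  · rw [sword, dif_neg hi, toWord, Function.extend_apply' _ _ _ fun ⟨j, hj⟩ => hi (hj ▸ j.isLt)]
    rfl

lemma negStat_sword_comp {n : ℕ} (σ : Equiv.Perm (Fin n)) (η : Fin n → Bool) :
    negStat n (sword n (σ, η ∘ σ)) = #{v | η v = true} := by
  rw [negStat_sword]
  exact card_equiv σ fun i => by simp

section
variable {R : Type*} [CommRing R]

lemma sum_pow_card_eq_true (u : R) (n : ℕ) :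
    ∑ η : Fin n → Bool, u ^ #{v | η v = true} = (1 + u) ^ n := by
  have h := Fintype.sum_pow (fun b : Bool => if b = true then u else 1) n
  rw [Fintype.sum_bool, if_pos rfl, if_neg Bool.false_ne_true, add_comm] at h
  simp only [h, prod_ite, prod_const, one_pow, mul_one]

lemma sum_signedPerm_pow_majStat_mul_pow_negStat (t u : R) (n : ℕ) :
    ∑ w : SignedPerm n, t ^ majStat n (sword n w) * u ^ negStat n (sword n w)
      = qFactorial t n * (1 + u) ^ n := by
  have signs_by_value (σ : Equiv.Perm (Fin n)) :
      ∑ ε, t ^ majStat n (sword n (σ, ε)) * u ^ negStat n (sword n (σ, ε))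
        = ∑ η, t ^ majStat n (toWord (signedLetter η ∘ σ)) * u ^ #{v | η v = true} := by
    rw [← (Equiv.arrowCongr σ.symm (Equiv.refl Bool)).sum_comp]
    refine sum_congr rfl fun η _ => ?_
    rw [← sword_comp, ← negStat_sword_comp σ]
    rfl
  simp only [Fintype.sum_prod_type, signs_by_value]
  rw [sum_comm, ← sum_pow_card_eq_true, mul_sum]
  refine sum_congr rfl fun η _ => ?_
  rw [← sum_mul, sum_perm_pow_majStat t (signedLetter_injective η)]

end

end SignedPerm

section PositiveFixedPoints

/-- The signed permutations without positive fixed points. -/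
def signedDerangements (n : ℕ) : Finset (SignedPerm n) :=
  univ.filter fun w => fixPlus n (sword n w) = 0

/-- The positions of a signed permutation that are not positive fixed points. -/
def nonFixed {n : ℕ} (w : SignedPerm n) : Finset (Fin n) :=
  univ.filter fun i => sword n w i ≠ ((i : ℕ) : ℤ) + 1

lemma notMem_nonFixed {n : ℕ} {w : SignedPerm n} {i : Fin n} :
    i ∉ nonFixed w ↔ w.1 i = i ∧ w.2 i = false := by
  rw [nonFixed, mem_filter_univ, not_not, sword_eq_self_iff]

lemma mem_signedDerangements {n : ℕ} {w : SignedPerm n} :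
    w ∈ signedDerangements n ↔ nonFixed w = univ := by
  rw [signedDerangements, mem_filter_univ, fixPlus, card_filter_range_eq_card_fin, card_eq_zero,
    filter_eq_empty_iff, nonFixed, filter_eq_self]

/-- The word obtained from `x` by replacing positive fixed points by `0`, moving the letters
exceeding their position above `n` and the remaining letters below `-n`. -/
def excShift (n : ℕ) (x : ℕ → ℤ) : ℕ → ℤ := fun i =>
  if x i = (i : ℤ) + 1 then 0 else if (i : ℤ) + 1 < x i then x i + (n + 1) else x i - (n + 1)

lemma excShift_pos_iff {n : ℕ} (w : SignedPerm n) (i : Fin n) :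
    0 < excShift n (sword n w) i ↔ ((i : ℕ) : ℤ) + 1 < sword n w i := by
  have bound := abs_le.1 (abs_sword_le w i)
  rw [excShift]
  split_ifs <;> omega

lemma excShift_neg_iff {n : ℕ} (w : SignedPerm n) (i : Fin n) :
    excShift n (sword n w) i < 0 ↔ sword n w i < ((i : ℕ) : ℤ) + 1 := by
  have bound := abs_le.1 (abs_sword_le w i)
  rw [excShift]
  split_ifs <;> omega

lemma excShift_ne_zero {n : ℕ} {w : SignedPerm n} (hw : w ∈ signedDerangements n) :
    ∀ i < n, excShift n (sword n w) i ≠ 0 := fun i hi => by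
  have not_fixed : (⟨i, hi⟩ : Fin n) ∈ nonFixed w := mem_signedDerangements.1 hw ▸ mem_univ _
  rw [nonFixed, mem_filter_univ] at not_fixed
  rcases not_fixed.lt_or_gt with h | h
  · exact ((excShift_neg_iff w ⟨i, hi⟩).2 h).ne
  · exact ((excShift_pos_iff w ⟨i, hi⟩).2 h).ne'

-- A letter `c ≠ i` adjacent to the positive fixed point `i` stands at the position `i ± 1`, so it
-- lies on the same side of `i` as of its own position, or is a positive fixed point itself.
lemma majStat_excShift {n : ℕ} (w : SignedPerm n) :
    majStat n (excShift n (sword n w)) = majStat n (sword n w) := by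
  refine majStat_congr fun i hi => ?_
  have bound := abs_le.1 (abs_sword_le w ⟨i, by omega⟩)
  have bound' := abs_le.1 (abs_sword_le w ⟨i + 1, hi⟩)
  have distinct : sword n w (i + 1) ≠ sword n w i := fun h =>
    i.succ_ne_self (Fin.mk.inj_iff.1 (@sword_injective n w ⟨i + 1, hi⟩ ⟨i, by omega⟩ h))
  simp only [excShift, Nat.cast_succ] at bound bound' ⊢
  split_ifs <;> omega

namespace SignedPerm

variable {k n : ℕ}

/-- The signed permutation acting as `d` on the range of `e`, with all other positions positive
fixed points. -/
def viaEmbedding (d : SignedPerm k) (e : Fin k ↪o Fin n) : SignedPerm n :=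
  (d.1.viaEmbedding e.toEmbedding, Function.extend e d.2 fun _ => false)

variable (d : SignedPerm k) (e : Fin k ↪o Fin n)

lemma viaEmbedding_fst_apply (j : Fin k) : (viaEmbedding d e).1 (e j) = e (d.1 j) :=
  d.1.viaEmbedding_apply e.toEmbedding j

lemma viaEmbedding_snd_apply (j : Fin k) : (viaEmbedding d e).2 (e j) = d.2 j :=
  e.injective.extend_apply d.2 (fun _ => false) j

lemma notMem_nonFixed_viaEmbedding {i : Fin n} (hi : i ∉ Set.range e) :
    i ∉ nonFixed (viaEmbedding d e) :=
  notMem_nonFixed.2 ⟨d.1.viaEmbedding_apply_of_notMem e.toEmbedding i hi,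
    Function.extend_apply' d.2 (fun _ => false) i hi⟩

lemma nonFixed_viaEmbedding : nonFixed (viaEmbedding d e) = (nonFixed d).map e.toEmbedding := by
  ext i
  by_cases hi : i ∈ Set.range e
  · obtain ⟨j, rfl⟩ := hi
    rw [← not_iff_not, notMem_nonFixed, viaEmbedding_fst_apply, viaEmbedding_snd_apply,
      e.injective.eq_iff, ← notMem_nonFixed]
    exact (mem_map' e.toEmbedding).not.symm
  · refine iff_of_false (notMem_nonFixed_viaEmbedding d e hi) fun h => ?_
    obtain ⟨j, -, rfl⟩ := mem_map.1 h
    exact hi ⟨j, rfl⟩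

lemma viaEmbedding_injective : Function.Injective fun d : SignedPerm k => viaEmbedding d e := by
  intro d d' (h : viaEmbedding d e = viaEmbedding d' e)
  refine Prod.ext (Equiv.ext fun j => e.injective ?_) (funext fun j => ?_)
  · rw [← viaEmbedding_fst_apply, h, viaEmbedding_fst_apply]
  · rw [← viaEmbedding_snd_apply d e, h, viaEmbedding_snd_apply]

lemma exists_viaEmbedding_eq {w : SignedPerm n} (hw : nonFixed w ⊆ univ.map e.toEmbedding) :
    ∃ d : SignedPerm k, viaEmbedding d e = w := by
  have fixed_outside {i : Fin n} (hi : i ∉ Set.range e) : w.1 i = i ∧ w.2 i = false :=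
    notMem_nonFixed.1 fun h => hi <| by simpa using hw h
  have maps_range (j : Fin k) : ∃ j', e j' = w.1 (e j) := by
    by_contra hj
    exact hj ⟨j, (w.1.injective (fixed_outside hj).1).symm⟩
  choose g hg using maps_range
  have g_injective : Function.Injective g := fun i j h =>
    e.injective <| w.1.injective <| by rw [← hg, ← hg, h]
  refine ⟨(Equiv.ofBijective g (Finite.injective_iff_bijective.1 g_injective), w.2 ∘ e),
    Prod.ext (Equiv.ext fun i => ?_) (funext fun i => ?_)⟩ <;>
  by_cases hi : i ∈ Set.range e
  · obtain ⟨j, rfl⟩ := hi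
    exact (viaEmbedding_fst_apply _ e j).trans (hg j)
  · rw [(fixed_outside hi).1, (notMem_nonFixed.1 (notMem_nonFixed_viaEmbedding _ e hi)).1]
  · obtain ⟨j, rfl⟩ := hi
    exact viaEmbedding_snd_apply _ e j
  · rw [(fixed_outside hi).2, (notMem_nonFixed.1 (notMem_nonFixed_viaEmbedding _ e hi)).2]

lemma negStat_viaEmbedding :
    negStat n (sword n (viaEmbedding d e)) = negStat k (sword k d) := by
  rw [negStat_sword, negStat_sword, ← card_map e.toEmbedding]
  congr 1
  ext i
  by_cases hi : i ∈ Set.range e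
  · obtain ⟨j, rfl⟩ := hi
    rw [mem_filter_univ, viaEmbedding_snd_apply]
    exact ((mem_map' e.toEmbedding).trans (mem_filter_univ (p := fun l => d.2 l = true) j)).symm
  · refine iff_of_false (fun h => ?_) fun h => ?_
    · rw [mem_filter_univ, (notMem_nonFixed.1 (notMem_nonFixed_viaEmbedding d e hi)).2] at h
      exact Bool.false_ne_true h
    · obtain ⟨j, -, rfl⟩ := mem_map.1 h
      exact hi ⟨j, rfl⟩

lemma sword_viaEmbedding_lt_iff (i j : Fin k) :
    sword n (viaEmbedding d e) (e i) < sword n (viaEmbedding d e) (e j)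
      ↔ sword k d i < sword k d j := by
  have order := e.lt_iff_lt (a := d.1 i) (b := d.1 j)
  have order' := e.lt_iff_lt (a := d.1 j) (b := d.1 i)
  simp only [sword_apply, viaEmbedding_fst_apply, viaEmbedding_snd_apply]
  split_ifs <;> omega

lemma self_lt_sword_viaEmbedding_iff (j : Fin k) :
    ((e j : ℕ) : ℤ) + 1 < sword n (viaEmbedding d e) (e j) ↔ ((j : ℕ) : ℤ) + 1 < sword k d j := by
  have order := e.lt_iff_lt (a := j) (b := d.1 j)
  simp only [sword_apply, viaEmbedding_fst_apply, viaEmbedding_snd_apply]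
  split_ifs <;> omega

lemma sword_viaEmbedding_lt_self_iff (j : Fin k) :
    sword n (viaEmbedding d e) (e j) < ((e j : ℕ) : ℤ) + 1 ↔ sword k d j < ((j : ℕ) : ℤ) + 1 := by
  have order := e.lt_iff_lt (a := d.1 j) (b := j)
  simp only [sword_apply, viaEmbedding_fst_apply, viaEmbedding_snd_apply]
  split_ifs <;> omega

lemma excShift_viaEmbedding_lt_iff (i j : Fin k) :
    excShift n (sword n (viaEmbedding d e)) (e i) < excShift n (sword n (viaEmbedding d e)) (e j)
      ↔ excShift k (sword k d) i < excShift k (sword k d) j := by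
  have order := sword_viaEmbedding_lt_iff d e i j
  have letter (l : Fin k) := And.intro
    (And.intro (abs_le.1 (abs_sword_le d l)) (abs_le.1 (abs_sword_le (viaEmbedding d e) (e l))))
    (And.intro (self_lt_sword_viaEmbedding_iff d e l) (sword_viaEmbedding_lt_self_iff d e l))
  have letter_i := letter i
  have letter_j := letter j
  simp only [excShift]
  split_ifs <;> omega

lemma excShift_viaEmbedding_of_notMem {i : Fin n} (hi : i ∉ Set.range e) :
    excShift n (sword n (viaEmbedding d e)) i = 0 :=
  if_pos <| (sword_eq_self_iff _ i).2 <| notMem_nonFixed.1 <| notMem_nonFixed_viaEmbedding d e hi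

lemma excShift_viaEmbedding_lt_iff_insertZeros (a b : Fin n) :
    excShift n (sword n (viaEmbedding d e)) a < excShift n (sword n (viaEmbedding d e)) b
      ↔ insertZeros (excShift k (sword k d))
            ((univ.map e.toEmbedding).map Fin.valEmbedding) a
          < insertZeros (excShift k (sword k d))
            ((univ.map e.toEmbedding).map Fin.valEmbedding) b := by
  have inserted := insertZeros_map_valEmbedding_apply (excShift k (sword k d)) e
  have zeros {i : Fin n} (hi : i ∉ Set.range e) :=
    insertZeros_map_valEmbedding_of_notMem (excShift k (sword k d)) e hi
  by_cases ha : a ∈ Set.range e <;> by_cases hb : b ∈ Set.range e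
  · obtain ⟨i, rfl⟩ := ha
    obtain ⟨j, rfl⟩ := hb
    rw [inserted, inserted, excShift_viaEmbedding_lt_iff]
  · obtain ⟨i, rfl⟩ := ha
    rw [inserted, zeros hb, excShift_viaEmbedding_of_notMem d e hb, excShift_neg_iff,
      excShift_neg_iff, sword_viaEmbedding_lt_self_iff]
  · obtain ⟨j, rfl⟩ := hb
    rw [inserted, zeros ha, excShift_viaEmbedding_of_notMem d e ha, excShift_pos_iff,
      excShift_pos_iff, self_lt_sword_viaEmbedding_iff]
  · rw [zeros ha, zeros hb, excShift_viaEmbedding_of_notMem d e ha,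
      excShift_viaEmbedding_of_notMem d e hb]

lemma majStat_viaEmbedding :
    majStat n (sword n (viaEmbedding d e))
      = majStat n (insertZeros (excShift k (sword k d))
          ((univ.map e.toEmbedding).map Fin.valEmbedding)) := by
  rw [← majStat_excShift]
  exact majStat_congr fun i hi =>
    excShift_viaEmbedding_lt_iff_insertZeros d e ⟨i + 1, hi⟩ ⟨i, by omega⟩

end SignedPerm

lemma sum_nonFixed_eq {M : Type*} [AddCommMonoid M] {n k : ℕ} {S : Finset (Fin n)} (hS : #S = k)
    (F : SignedPerm n → M) :
    ∑ w with nonFixed w = S, F w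
      = ∑ d ∈ signedDerangements k, F (d.viaEmbedding (S.orderEmbOfFin hS)) := by
  have range_emb : univ.map (S.orderEmbOfFin hS).toEmbedding = S := map_orderEmbOfFin_univ S hS
  symm
  refine sum_nbij (SignedPerm.viaEmbedding · (S.orderEmbOfFin hS)) (fun d hd => ?_)
    (SignedPerm.viaEmbedding_injective _).injOn (fun w hw => ?_) fun _ _ => rfl
  · rw [mem_filter_univ, SignedPerm.nonFixed_viaEmbedding, mem_signedDerangements.1 hd, range_emb]
  · rw [mem_coe, mem_filter_univ, ← range_emb] at hw
    obtain ⟨d, rfl⟩ := SignedPerm.exists_viaEmbedding_eq _ hw.le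
    rw [SignedPerm.nonFixed_viaEmbedding, map_inj] at hw
    exact ⟨d, mem_signedDerangements.2 hw, rfl⟩

section
variable {R : Type*} [CommRing R]

lemma sum_nonFixed_card_eq (t u : R) (n k : ℕ) :
    ∑ S ∈ powersetCard k (univ : Finset (Fin n)), ∑ w with nonFixed w = S,
        t ^ majStat n (sword n w) * u ^ negStat n (sword n w)
      = gaussBinom t n k *
        ∑ d ∈ signedDerangements k, t ^ majStat k (sword k d) * u ^ negStat k (sword k d) := by
  have fiber (S) (hS : S ∈ powersetCard k (univ : Finset (Fin n))) :
      ∑ w with nonFixed w = S, t ^ majStat n (sword n w) * u ^ negStat n (sword n w)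
        = ∑ d ∈ signedDerangements k,
          t ^ majStat n (insertZeros (excShift k (sword k d)) (S.map Fin.valEmbedding))
            * u ^ negStat k (sword k d) := by
    have hSk := (mem_powersetCard.1 hS).2
    simp only [sum_nonFixed_eq hSk, SignedPerm.majStat_viaEmbedding,
      SignedPerm.negStat_viaEmbedding]
    rw [show univ.map (S.orderEmbOfFin hSk).toEmbedding = S from map_orderEmbOfFin_univ S hSk]
  rw [sum_congr rfl fiber, sum_comm, mul_sum]
  refine sum_congr rfl fun d hd => ?_
  rw [← sum_mul, sum_pow_majStat_insertZeros t _ n k (excShift_ne_zero hd), majStat_excShift]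
  ring

lemma sum_signedPerm_eq_sum_gaussBinom_mul (t u : R) (n : ℕ) :
    ∑ w : SignedPerm n, t ^ majStat n (sword n w) * u ^ negStat n (sword n w)
      = ∑ k ∈ range (n + 1), gaussBinom t n k *
        ∑ d ∈ signedDerangements k, t ^ majStat k (sword k d) * u ^ negStat k (sword k d) := by
  rw [← sum_fiberwise_of_maps_to (t := (univ : Finset (Fin n)).powerset) (g := nonFixed)
    fun w _ => mem_powerset.2 (subset_univ _), sum_powerset, card_univ, Fintype.card_fin]
  exact sum_congr rfl fun k _ => sum_nonFixed_card_eq t u n k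

lemma DB_eq_sum_signedDerangements (q Z : R) (k : ℕ) :
    DB q Z k = ∑ d ∈ signedDerangements k,
      (q ^ 2) ^ majStat k (sword k d) * (q * Z) ^ negStat k (sword k d) := by
  refine sum_congr rfl fun d _ => ?_
  rw [fmajStat, pow_add, pow_mul, mul_pow, mul_assoc]

end

end PositiveFixedPoints

theorem stmt12_general {R : Type*} [CommRing R] (q Z : R) (n : ℕ) :
    qFactorial (q ^ 2) n * (1 + q * Z) ^ n
      = ∑ k ∈ range (n + 1), gaussBinom (q ^ 2) n k * DB q Z k := by
  simp only [DB_eq_sum_signedDerangements]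
  rw [← sum_signedPerm_pow_majStat_mul_pow_negStat, sum_signedPerm_eq_sum_gaussBinom_mul]

lemma qq_div_one_sub_pow {K : Type*} [Field K] {t : K} (ht : 1 - t ≠ 0) (n : ℕ) :
    qq t n / (1 - t) ^ n = qFactorial t n := by
  rw [← qFactorial_mul_one_sub_pow, mul_div_cancel_right₀ _ (pow_ne_zero n ht)]

lemma gaussBinom_eq_div {K : Type*} [Field K] {t : K} {n k : ℕ} (hk : k ≤ n) (h : qq t k ≠ 0)
    (h' : qq t (n - k) ≠ 0) : qq t n / (qq t k * qq t (n - k)) = gaussBinom t n k := by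
  have product := gaussBinom_mul_qq_mul_qq t k (n - k)
  rw [Nat.add_sub_cancel' hk] at product
  rw [← product, mul_div_cancel_right₀ _ (mul_ne_zero h h')]

theorem stmt12 (K : Type*) [Field K] (q Z : K) (n : ℕ)
    (h1 : (1 : K) - q ^ 2 ≠ 0) (h2 : ∀ m ≤ n, qq (q ^ 2) m ≠ 0) :
    qq (q ^ 2) n / (1 - q ^ 2) ^ n * (1 + q * Z) ^ n
      = ∑ k ∈ Finset.range (n + 1),
          (qq (q ^ 2) n / (qq (q ^ 2) k * qq (q ^ 2) (n - k))) * DB q Z k := by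
  rw [qq_div_one_sub_pow h1, stmt12_general]
  refine sum_congr rfl fun k hk => ?_
  have hkn : k ≤ n := mem_range_succ_iff.1 hk
  rw [gaussBinom_eq_div hkn (h2 k hkn) (h2 _ (n.sub_le k))]
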